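/- arXiv:1604.03220 — 6 statements merged into one kernel-verified Lean document; each statement's English description precedes it below -/
import Mathlib

section
/- First de Casteljau algorithm for (p,q)-Bézier curves: let n ≥ 1, let p, q be reals with 0 < q < p, let d ≥ 1, and let P_0, …, P_n ∈ ℝ^d. Fix a real t and define recursively Q_i^0 = P_i for i = 0, …, n, and Q_i^k = (p^{n−k} − p^i q^{n−k−i} t) Q_i^{k−1} + p^i q^{n−k−i} t Q_{i+1}^{k−1} for k = 1, …, n and i = 0, …, n−k. Then Q_0^n = p^{n(n−1)/2} Σ_{i=0}^{n} P_i B_i^n(t;p,q). -/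
/-- The (p,q)-integer `[n]_{p,q} = Σ_{j=0}^{n-1} p^{n-1-j} q^j`. -/
noncomputable def pqInt (p q : ℝ) (n : ℕ) : ℝ :=
  ∑ j ∈ Finset.range n, p ^ (n - 1 - j) * q ^ j

/-- The (p,q)-factorial `[n]_{p,q}! = ∏_{j=1}^{n} [j]_{p,q}`. -/
noncomputable def pqFact (p q : ℝ) : ℕ → ℝ
  | 0 => 1
  | n + 1 => pqFact p q n * pqInt p q (n + 1)

/-- The (p,q)-binomial coefficient `[n choose k]_{p,q}`. -/
noncomputable def pqBinom (p q : ℝ) (n k : ℕ) : ℝ :=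
  pqFact p q n / (pqFact p q k * pqFact p q (n - k))

/-- The (p,q)-Bernstein basis function
`B_k^n(t;p,q) = p^{k(k-1)/2 - n(n-1)/2} [n choose k]_{p,q} t^k ∏_{s=0}^{n-k-1} (p^s - q^s t)`. -/
noncomputable def pqBernstein (p q : ℝ) (n k : ℕ) (t : ℝ) : ℝ :=
  p ^ (k * (k - 1) / 2) / p ^ (n * (n - 1) / 2) * pqBinom p q n k * t ^ k *
    ∏ s ∈ Finset.range (n - k), (p ^ s - q ^ s * t)

/-- Recursive (p,q)-binomial. -/
noncomputable def pqC (p q : ℝ) : ℕ → ℕ → ℝ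
  | 0, 0 => 1
  | 0, _ + 1 => 0
  | _ + 1, 0 => 1
  | m + 1, i + 1 => p ^ (i + 1) * pqC p q m (i + 1) + q ^ (m - i) * pqC p q m i

theorem pqC_zero (p q : ℝ) (m : ℕ) : pqC p q m 0 = 1 := by
  cases m <;> simp [pqC]

theorem pqC_lt (p q : ℝ) (m : ℕ) : ∀ i, m < i → pqC p q m i = 0 := by
  induction m with
  | zero => intro i hi; cases i with
    | zero => omega
    | succ i => simp [pqC]
  | succ m ih => intro i hi; cases i with
    | zero => omega
    | succ i => simp [pqC, ih i (by omega), ih (i + 1) (by omega)]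

theorem pqC_self (p q : ℝ) (m : ℕ) : pqC p q m m = 1 := by
  induction m with
  | zero => simp [pqC]
  | succ m ih => simp [pqC, ih, pqC_lt p q m (m + 1) (by omega)]

theorem pqInt_mul (p q : ℝ) (n : ℕ) : (p - q) * pqInt p q n = p ^ n - q ^ n := by
  have h := (Commute.all q p).mul_geom_sum₂ n
  have : pqInt p q n = ∑ i ∈ Finset.range n, q ^ i * p ^ (n - 1 - i) := by
    unfold pqInt
    exact Finset.sum_congr rfl fun j _ => mul_comm _ _
  rw [this]; linarith

theorem pqInt_add (p q : ℝ) (hqp : q < p) (a b : ℕ) :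
    pqInt p q (a + b) = p ^ a * pqInt p q b + q ^ b * pqInt p q a := by
  have h : p - q ≠ 0 := (sub_pos.2 hqp).ne'
  apply mul_left_cancel₀ h
  have h1 := pqInt_mul p q (a + b)
  have h2 := pqInt_mul p q a
  have h3 := pqInt_mul p q b
  linear_combination h1 - p ^ a * h3 - q ^ b * h2

theorem pqFact_pos (p q : ℝ) (h0 : 0 < q) (hqp : q < p) (n : ℕ) : 0 < pqFact p q n := by
  induction n with
  | zero => simp [pqFact]
  | succ n ih =>
    have hp : 0 < p := h0.trans hqp
    have : 0 < pqInt p q (n + 1) := by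
      unfold pqInt
      apply Finset.sum_pos
      · intro i _; positivity
      · exact ⟨0, by simp⟩
    simp only [pqFact]; positivity

theorem pqC_fact (p q : ℝ) (hqp : q < p) (m : ℕ) : ∀ a b, a + b = m →
    pqC p q m a * (pqFact p q a * pqFact p q b) = pqFact p q m := by
  induction m with
  | zero =>
    intro a b h
    obtain ⟨rfl, rfl⟩ : a = 0 ∧ b = 0 := by omega
    simp [pqC, pqFact]
  | succ m ih =>
    intro a b h
    rcases a with _ | a
    · obtain rfl : b = m + 1 := by omega
      simp [pqC_zero, pqFact]
    rcases b with _ | b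
    · obtain rfl : a = m := by omega
      simp [pqC_self, pqFact]
    have e1 := ih (a + 1) b (by omega)
    have e2 := ih a (b + 1) (by omega)
    have e3 := pqInt_add p q hqp (a + 1) (b + 1)
    rw [show a + 1 + (b + 1) = m + 1 by omega] at e3
    simp only [pqC, pqFact] at *
    rw [show m - a = b + 1 by omega, e3]
    linear_combination p ^ (a + 1) * pqInt p q (b + 1) * e1 + q ^ (b + 1) * pqInt p q (a + 1) * e2

/-- Unnormalised Bernstein function. -/
noncomputable def pqB (p q t : ℝ) (m i : ℕ) : ℝ :=
  p ^ (i.choose 2) * pqC p q m i * t ^ i * ∏ s ∈ Finset.range (m - i), (p ^ s - q ^ s * t)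

theorem pqB_lt (p q t : ℝ) (m : ℕ) : pqB p q t m (m + 1) = 0 := by
  simp [pqB, pqC_lt p q m (m + 1) (by omega)]

theorem pqB_zero (p q t : ℝ) (m : ℕ) :
    pqB p q t (m + 1) 0 = pqB p q t m 0 * (p ^ m - q ^ m * t) := by
  simp [pqB, pqC_zero, Finset.prod_range_succ]

theorem pqB_succ (p q t : ℝ) (m i : ℕ) (hi : i ≤ m) :
    pqB p q t (m + 1) (i + 1) =
      pqB p q t m (i + 1) * (p ^ m - p ^ (i + 1) * q ^ (m - (i + 1)) * t) +
      pqB p q t m i * (p ^ i * q ^ (m - i) * t) := by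
  have hc : (i + 1).choose 2 = i + i.choose 2 := by
    rw [Nat.choose_succ_succ' i 1]; simp
  rcases hi.eq_or_lt with rfl | hi
  · rw [pqB_lt]
    simp only [pqB, pqC_self, hc]
    simp
    ring
  · obtain ⟨r, rfl⟩ : ∃ r, m = i + 1 + r := ⟨m - (i + 1), by omega⟩
    simp only [pqB, pqC, hc]
    rw [show i + 1 + r + 1 - (i + 1) = r + 1 by omega, show i + 1 + r - (i + 1) = r by omega,
      show i + 1 + r - i = r + 1 by omega, Finset.prod_range_succ]
    ring

theorem pqB_eq (p q t : ℝ) (h0 : 0 < q) (hqp : q < p) (n i : ℕ) (hi : i ≤ n) :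
    p ^ (n * (n - 1) / 2) * pqBernstein p q n i t = pqB p q t n i := by
  have hp : 0 < p := h0.trans hqp
  have hC : pqBinom p q n i = pqC p q n i := by
    have h1 := pqFact_pos p q h0 hqp i
    have h2 := pqFact_pos p q h0 hqp (n - i)
    unfold pqBinom
    rw [div_eq_iff (by positivity)]
    exact (pqC_fact p q hqp n i (n - i) (by omega)).symm
  unfold pqBernstein pqB
  rw [hC, Nat.choose_two_right]
  have : p ^ (n * (n - 1) / 2) ≠ 0 := by positivity
  generalize ∏ s ∈ Finset.range (n - i), (p ^ s - q ^ s * t) = X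
  field_simp

/-- the first de Casteljau algorithm for (p,q)-Bézier curves.
With `Q_i^0 = P_i` and
`Q_i^k = (p^{n-k} - p^i q^{n-k-i} t) Q_i^{k-1} + p^i q^{n-k-i} t Q_{i+1}^{k-1}`,
one has `Q_0^n = p^{n(n-1)/2} Σ_{i=0}^{n} P_i B_i^n(t;p,q)`. -/
theorem pq_deCasteljau_first (n d : ℕ) (hn : 1 ≤ n) (hd : 1 ≤ d)
    (p q : ℝ) (h0 : 0 < q) (hqp : q < p)
    (P : ℕ → Fin d → ℝ) (t : ℝ) (Q : ℕ → ℕ → Fin d → ℝ)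
    (hQ0 : ∀ i ≤ n, Q 0 i = P i)
    (hQ : ∀ k, 1 ≤ k → k ≤ n → ∀ i ≤ n - k,
      Q k i = (p ^ (n - k) - p ^ i * q ^ (n - k - i) * t) • Q (k - 1) i +
        (p ^ i * q ^ (n - k - i) * t) • Q (k - 1) (i + 1)) :
    Q n 0 = (p ^ (n * (n - 1) / 2) : ℝ) •
      ∑ i ∈ Finset.range (n + 1), pqBernstein p q n i t • P i := by
  have key : ∀ m, m ≤ n → Q n 0 = ∑ i ∈ Finset.range (m + 1), pqB p q t m i • Q (n - m) i := by
    intro m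
    induction m with
    | zero => intro _; simp [pqB, pqC]
    | succ m ih =>
      intro hm
      rw [ih (by omega)]
      have e1 : ∑ i ∈ Finset.range (m + 1), pqB p q t m i • Q (n - m) i =
          ∑ i ∈ Finset.range (m + 1),
            (pqB p q t m i * (p ^ m - p ^ i * q ^ (m - i) * t)) • Q (n - (m + 1)) i +
          ∑ i ∈ Finset.range (m + 1),
            (pqB p q t m i * (p ^ i * q ^ (m - i) * t)) • Q (n - (m + 1)) (i + 1) := by
        rw [← Finset.sum_add_distrib]
        refine Finset.sum_congr rfl fun i hi => ?_
        have hi' := Finset.mem_range.1 hi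
        rw [hQ (n - m) (by omega) (by omega) i (by omega), show n - (n - m) = m by omega,
          show n - m - 1 = n - (m + 1) by omega, smul_add, smul_smul, smul_smul]
      have e2 : ∑ i ∈ Finset.range (m + 1),
            (pqB p q t m i * (p ^ m - p ^ i * q ^ (m - i) * t)) • Q (n - (m + 1)) i =
          ∑ i ∈ Finset.range (m + 1 + 1),
            (pqB p q t m i * (p ^ m - p ^ i * q ^ (m - i) * t)) • Q (n - (m + 1)) i := by
        rw [Finset.sum_range_succ _ (m + 1), pqB_lt]
        simp
      rw [e1, e2, Finset.sum_range_succ' _ (m + 1), Finset.sum_range_succ' _ (m + 1), pqB_zero,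
        add_right_comm, ← Finset.sum_add_distrib]
      congr 1
      · refine Finset.sum_congr rfl fun i hi => ?_
        have hi' := Finset.mem_range.1 hi
        rw [pqB_succ p q t m i (by omega), add_smul]
      · simp
  rw [key n le_rfl, Finset.smul_sum]
  refine Finset.sum_congr rfl fun i hi => ?_
  have hi' : i ≤ n := by have := Finset.mem_range.1 hi; omega
  rw [smul_smul, pqB_eq p q t h0 hqp n i hi', Nat.sub_self, hQ0 i hi']
end

section
/- (p,q)-blossom of a monomial: let n ≥ 1, let 0 ≤ k ≤ n, and let p, q be reals with 0 < q < p. Define m : ℝ^n → ℝ by m(u_1, …, u_n) = φ_{n,k}(u_1, …, u_n) / φ_{n,k}(p^{n−1}, p^{n−2}q, …, q^{n−1}), where φ_{n,0} = 1 and the denominator arguments are p^{n−i} q^{i−1} for i = 1, …, n (the denominator being nonzero since 0 < q < p). Then m is symmetric, m is multiaffine, and m(p^{n−1}t, p^{n−2}q t, …, q^{n−1}t) = t^k for every real t; that is, m is the (p,q)-blossom of the monomial t^k regarded as a polynomial of degree n. -/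
/-- The `k`-th elementary symmetric polynomial in `n` variables:
`φ_{n,k}(u_1, …, u_n) = Σ_{1 ≤ i_1 < … < i_k ≤ n} u_{i_1} ⋯ u_{i_k}`. -/
noncomputable def esymmEval (n k : ℕ) (u : Fin n → ℝ) : ℝ :=
  ∑ S ∈ Finset.powersetCard k (Finset.univ : Finset (Fin n)), ∏ i ∈ S, u i

/-- A function `f : ℝ^n → ℝ` is symmetric if it is invariant under all permutations
of its arguments. -/
def IsSymmetricFn (n : ℕ) (f : (Fin n → ℝ) → ℝ) : Prop :=
  ∀ (σ : Equiv.Perm (Fin n)) (u : Fin n → ℝ), f (fun i => u (σ i)) = f u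

/-- A function `f : ℝ^n → ℝ` is multiaffine if, fixing all variables except the `j`-th,
the resulting one-variable function is affine (degree at most one). -/
def IsMultiaffine (n : ℕ) (f : (Fin n → ℝ) → ℝ) : Prop :=
  ∀ (j : Fin n) (u : Fin n → ℝ), ∃ a b : ℝ,
    ∀ x : ℝ, f (Function.update u j x) = a * x + b

/-- the (p,q)-blossom of the monomial `t^k` (regarded as a polynomial of
degree `n`) is `m(u_1, …, u_n) = φ_{n,k}(u_1, …, u_n) / φ_{n,k}(p^{n-1}, p^{n-2}q, …, q^{n-1})`:
it is symmetric, multiaffine and reduces to `t^k` along the (p,q)-diagonal. -/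
theorem pq_blossom_monomial (n k : ℕ) (hn : 1 ≤ n) (hk : k ≤ n)
    (p q : ℝ) (h0 : 0 < q) (hqp : q < p)
    (m : (Fin n → ℝ) → ℝ)
    (hm : ∀ u, m u =
      esymmEval n k u / esymmEval n k (fun i => p ^ (n - 1 - (i : ℕ)) * q ^ (i : ℕ))) :
    IsSymmetricFn n m ∧ IsMultiaffine n m ∧
      ∀ t : ℝ, m (fun i => p ^ (n - 1 - (i : ℕ)) * q ^ (i : ℕ) * t) = t ^ k := by
  have hp : 0 < p := h0.trans hqp
  refine ⟨?_, ?_, ?_⟩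
  · intro σ u
    rw [hm, hm]
    congr 1
    unfold esymmEval
    refine Finset.sum_bij' (fun S _ => S.map σ.toEmbedding)
      (fun S _ => S.map σ.symm.toEmbedding) ?_ ?_ ?_ ?_ ?_
    · intro S hS
      simpa [Finset.mem_powersetCard] using hS
    · intro S hS
      simpa [Finset.mem_powersetCard] using hS
    · intro S _
      ext x
      simp
    · intro S _
      ext x
      simp
    · intro S _
      simp [Finset.prod_map]
  · intro j u
    have key : ∀ S : Finset (Fin n), ∃ a b : ℝ, ∀ x : ℝ,
        ∏ i ∈ S, Function.update u j x i = a * x + b := by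
      intro S
      by_cases hj : j ∈ S
      · refine ⟨∏ i ∈ S \ {j}, u i, 0, fun x => ?_⟩
        rw [Finset.prod_update_of_mem hj]
        ring
      · refine ⟨0, ∏ i ∈ S, u i, fun x => ?_⟩
        rw [Finset.prod_update_of_notMem hj]
        ring
    choose a b hab using key
    refine ⟨(∑ S ∈ Finset.powersetCard k (Finset.univ : Finset (Fin n)), a S) /
        esymmEval n k (fun i => p ^ (n - 1 - (i : ℕ)) * q ^ (i : ℕ)),
      (∑ S ∈ Finset.powersetCard k (Finset.univ : Finset (Fin n)), b S) /
        esymmEval n k (fun i => p ^ (n - 1 - (i : ℕ)) * q ^ (i : ℕ)), fun x => ?_⟩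
    rw [hm, div_mul_eq_mul_div, ← add_div]
    congr 1
    rw [Finset.sum_mul, ← Finset.sum_add_distrib]
    exact Finset.sum_congr rfl fun S _ => hab S x
  · intro t
    have hpos : 0 < esymmEval n k (fun i => p ^ (n - 1 - (i : ℕ)) * q ^ (i : ℕ)) := by
      unfold esymmEval
      refine Finset.sum_pos (fun S _ => Finset.prod_pos fun i _ => by positivity) ?_
      apply Finset.powersetCard_nonempty.2
      simpa using hk
    rw [hm, div_eq_iff hpos.ne']
    unfold esymmEval
    rw [Finset.mul_sum]
    refine Finset.sum_congr rfl fun S hS => ?_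
    rw [Finset.prod_mul_distrib, Finset.prod_const, (Finset.mem_powersetCard.1 hS).2, mul_comm]
end

section
/- Existence and uniqueness of the (p,q)-blossom: let n ≥ 1 and let p, q be reals with 0 < q < p. For every real polynomial S of degree at most n, there exists a unique symmetric multiaffine function s : ℝ^n → ℝ such that s(p^{n−1}t, p^{n−2}q t, …, q^{n−1}t) = S(t) for all real t (the i-th diagonal argument being p^{n−i} q^{i−1} t). -/
theorem esymmEval_symm (n k : ℕ) : IsSymmetricFn n (esymmEval n k) := by
  intro σ u
  unfold esymmEval
  refine Finset.sum_bij (fun T _ => T.map σ.toEmbedding) ?_ ?_ ?_ ?_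
  · intro T hT
    simpa [Finset.mem_powersetCard] using hT
  · intro T _ T' _ h
    exact Finset.map_injective _ h
  · intro T hT
    refine ⟨T.map σ.symm.toEmbedding, ?_, ?_⟩
    · simpa [Finset.mem_powersetCard] using hT
    · ext x
      simp [Finset.mem_map]
  · intro T _
    simp [Finset.prod_map]

theorem esymmEval_multiaffine (n k : ℕ) : IsMultiaffine n (esymmEval n k) := by
  intro j u
  have h : ∀ T : Finset (Fin n), ∃ a b : ℝ, ∀ x : ℝ,
      ∏ i ∈ T, Function.update u j x i = a * x + b := by
    intro T
    by_cases hj : j ∈ T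
    · refine ⟨∏ i ∈ T \ {j}, u i, 0, fun x => ?_⟩
      rw [Finset.prod_update_of_mem hj]
      ring
    · refine ⟨0, ∏ i ∈ T, u i, fun x => ?_⟩
      rw [Finset.prod_update_of_notMem hj]
      ring
  choose a b hab using h
  refine ⟨∑ T ∈ Finset.powersetCard k Finset.univ, a T,
    ∑ T ∈ Finset.powersetCard k Finset.univ, b T, fun x => ?_⟩
  unfold esymmEval
  rw [Finset.sum_mul, ← Finset.sum_add_distrib]
  exact Finset.sum_congr rfl fun T _ => hab T x

theorem esymmEval_smul (n k : ℕ) (l : Fin n → ℝ) (t : ℝ) :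
    esymmEval n k (fun i => l i * t) = esymmEval n k l * t ^ k := by
  unfold esymmEval
  rw [Finset.sum_mul]
  refine Finset.sum_congr rfl fun T hT => ?_
  rw [Finset.prod_mul_distrib, Finset.prod_const, (Finset.mem_powersetCard.1 hT).2]

theorem esymmEval_pos (n k : ℕ) (hk : k ≤ n) (l : Fin n → ℝ) (hl : ∀ i, 0 < l i) :
    0 < esymmEval n k l := by
  unfold esymmEval
  refine Finset.sum_pos (fun T _ => Finset.prod_pos fun i _ => hl i) ?_
  rw [Finset.powersetCard_nonempty]
  simpa using hk

theorem multiaffine_ext (n : ℕ) (f g : (Fin n → ℝ) → ℝ) (hf : IsMultiaffine n f)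
    (hg : IsMultiaffine n g)
    (h : ∀ u : Fin n → ℝ, (∀ i, u i = 0 ∨ u i = 1) → f u = g u) : f = g := by
  have key : ∀ A : Finset (Fin n), ∀ u : Fin n → ℝ, (∀ i, i ∉ A → u i = 0 ∨ u i = 1) →
      f u = g u := by
    intro A
    induction A using Finset.induction_on with
    | empty => intro u hu; exact h u fun i => hu i (by simp)
    | insert a A ha ih =>
      intro u hu
      have h01 : ∀ x : ℝ, x = 0 ∨ x = 1 →
          f (Function.update u a x) = g (Function.update u a x) := by
        intro x hx
        apply ih
        intro i hi
        by_cases hia : i = a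
        · subst hia; simpa using hx
        · rw [Function.update_of_ne hia]
          exact hu i (by simp [hia, hi])
      obtain ⟨c, d, hcd⟩ := hf a u
      obtain ⟨c', d', hcd'⟩ := hg a u
      have e0 := h01 0 (Or.inl rfl)
      have e1 := h01 1 (Or.inr rfl)
      have e := hcd (u a)
      have e' := hcd' (u a)
      rw [Function.update_eq_self] at e e'
      rw [hcd, hcd'] at e0 e1
      have hd : d = d' := by linarith
      have hc : c = c' := by linarith
      rw [e, e', hc, hd]
  funext u
  exact key Finset.univ u fun i hi => absurd (Finset.mem_univ i) hi

/-- The vector with `k` leading ones. -/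
noncomputable def stepVec (n k : ℕ) : Fin n → ℝ := fun i => if (i : ℕ) < k then 1 else 0

theorem symm_multiaffine_ext (n : ℕ) (f g : (Fin n → ℝ) → ℝ)
    (sf : IsSymmetricFn n f) (sg : IsSymmetricFn n g)
    (hf : IsMultiaffine n f) (hg : IsMultiaffine n g)
    (h : ∀ k : Fin (n + 1), f (stepVec n k) = g (stepVec n k)) : f = g := by
  classical
  refine multiaffine_ext n f g hf hg fun u hu => ?_
  have hcard : Fintype.card {i : Fin n // u i = 1} ≤ n := by
    simpa using Fintype.card_subtype_le (fun i : Fin n => u i = 1)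
  obtain ⟨k, hk⟩ : ∃ k, k = Fintype.card {i : Fin n // u i = 1} := ⟨_, rfl⟩
  have hkn : k ≤ n := hk ▸ hcard
  have hc : Fintype.card {i : Fin n // (i : ℕ) < k} = Fintype.card {i : Fin n // u i = 1} := by
    rw [← hk, Fintype.card_subtype]
    simp [Fin.card_filter_val_lt, hkn]
  let e := Fintype.equivOfCardEq hc
  have hs : (fun i => u (e.extendSubtype i)) = stepVec n k := by
    funext i
    unfold stepVec
    split_ifs with hi
    · exact e.extendSubtype_mem i hi
    · exact (hu _).resolve_right (e.extendSubtype_not_mem i hi)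
  rw [← sf e.extendSubtype u, ← sg e.extendSubtype u, hs]
  exact h ⟨k, by omega⟩

/-- The candidate blossom with given coefficients. -/
noncomputable def blos (n : ℕ) (l : Fin n → ℝ) (c : Fin (n + 1) → ℝ) (u : Fin n → ℝ) : ℝ :=
  ∑ k : Fin (n + 1), c k * (esymmEval n k u / esymmEval n k l)

theorem blos_symm (n : ℕ) (l : Fin n → ℝ) (c : Fin (n + 1) → ℝ) :
    IsSymmetricFn n (blos n l c) := by
  intro σ u
  unfold blos
  refine Finset.sum_congr rfl fun k _ => ?_
  rw [esymmEval_symm n k σ u]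

theorem blos_multiaffine (n : ℕ) (l : Fin n → ℝ) (c : Fin (n + 1) → ℝ) :
    IsMultiaffine n (blos n l c) := by
  intro j u
  choose a b hab using fun k : Fin (n + 1) => esymmEval_multiaffine n k j u
  refine ⟨∑ k, c k * (a k / esymmEval n k l), ∑ k, c k * (b k / esymmEval n k l), fun x => ?_⟩
  unfold blos
  rw [Finset.sum_mul, ← Finset.sum_add_distrib]
  refine Finset.sum_congr rfl fun k _ => ?_
  rw [hab]
  ring

theorem blos_diag (n : ℕ) (l : Fin n → ℝ) (hl : ∀ i, 0 < l i) (c : Fin (n + 1) → ℝ) (t : ℝ) :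
    blos n l c (fun i => l i * t) = ∑ k : Fin (n + 1), c k * t ^ (k : ℕ) := by
  unfold blos
  refine Finset.sum_congr rfl fun k _ => ?_
  rw [esymmEval_smul]
  have := (esymmEval_pos n k (by omega) l hl).ne'
  field_simp

theorem coeff_ext (n : ℕ) (c d : Fin (n + 1) → ℝ)
    (h : ∀ t : ℝ, ∑ k : Fin (n + 1), c k * t ^ (k : ℕ) = ∑ k : Fin (n + 1), d k * t ^ (k : ℕ)) :
    c = d := by
  have hP : (∑ k : Fin (n + 1), Polynomial.C (c k) * Polynomial.X ^ (k : ℕ)) =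
      ∑ k : Fin (n + 1), Polynomial.C (d k) * Polynomial.X ^ (k : ℕ) := by
    apply Polynomial.funext
    intro t
    simpa [Polynomial.eval_finsetSum] using h t
  funext k
  have := congrArg (fun P => Polynomial.coeff P (k : ℕ)) hP
  simpa [Polynomial.finsetSum_coeff, Polynomial.coeff_C_mul, Polynomial.coeff_X_pow,
    Fin.val_inj] using this

/-- Values of the candidate blossom at the step vectors, as a linear map. -/
noncomputable def blosMap (n : ℕ) (l : Fin n → ℝ) :
    (Fin (n + 1) → ℝ) →ₗ[ℝ] (Fin (n + 1) → ℝ) where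
  toFun c := fun m => blos n l c (stepVec n m)
  map_add' c d := by
    funext m
    simp [blos, add_mul, Finset.sum_add_distrib]
  map_smul' r c := by
    funext m
    simp [blos, Finset.mul_sum, mul_assoc]

theorem blos_surj (n : ℕ) (l : Fin n → ℝ) (hl : ∀ i, 0 < l i) (s : (Fin n → ℝ) → ℝ)
    (hs : IsSymmetricFn n s) (hm : IsMultiaffine n s) : ∃ c, s = blos n l c := by
  have hinj : Function.Injective (blosMap n l) := by
    intro c d hcd
    have he : blos n l c = blos n l d :=
      symm_multiaffine_ext n _ _ (blos_symm n l c) (blos_symm n l d)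
        (blos_multiaffine n l c) (blos_multiaffine n l d) fun k => congrFun hcd k
    apply coeff_ext
    intro t
    rw [← blos_diag n l hl, ← blos_diag n l hl, he]
  obtain ⟨c, hc⟩ := LinearMap.injective_iff_surjective.1 hinj (fun m => s (stepVec n m))
  exact ⟨c, symm_multiaffine_ext n _ _ hs (blos_symm n l c) hm (blos_multiaffine n l c)
    fun k => (congrFun hc k).symm⟩

/-- existence and uniqueness of the (p,q)-blossom.  For every real polynomial
`S` of degree at most `n` there is a unique symmetric multiaffine function `s : ℝ^n → ℝ`
reducing to `S` along the (p,q)-diagonal. -/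
theorem pq_blossom_exists_unique (n : ℕ) (hn : 1 ≤ n)
    (p q : ℝ) (h0 : 0 < q) (hqp : q < p)
    (S : Polynomial ℝ) (hS : S.natDegree ≤ n) :
    ∃! s : (Fin n → ℝ) → ℝ,
      IsSymmetricFn n s ∧ IsMultiaffine n s ∧
        ∀ t : ℝ, s (fun i => p ^ (n - 1 - (i : ℕ)) * q ^ (i : ℕ) * t) = S.eval t := by
  have hp : 0 < p := h0.trans hqp
  obtain ⟨l, hl⟩ : ∃ l : Fin n → ℝ, l = fun i : Fin n => p ^ (n - 1 - (i : ℕ)) * q ^ (i : ℕ) := ⟨_, rfl⟩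
  have hlpos : ∀ i, 0 < l i := by
    intro i
    rw [hl]
    positivity
  have hdiag : ∀ t : ℝ, (fun i : Fin n => p ^ (n - 1 - (i : ℕ)) * q ^ (i : ℕ) * t) =
      fun i => l i * t := by
    intro t
    rw [hl]
  have hev : ∀ t : ℝ, S.eval t = ∑ k : Fin (n + 1), S.coeff k * t ^ (k : ℕ) := by
    intro t
    rw [Polynomial.eval_eq_sum_range' (Nat.lt_succ_of_le hS), Finset.sum_range]
  refine ⟨blos n l (fun k => S.coeff k), ⟨blos_symm n l _, blos_multiaffine n l _, ?_⟩, ?_⟩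
  · intro t
    rw [hdiag, blos_diag n l hlpos, hev]
  · rintro s ⟨hs, hm, hd⟩
    obtain ⟨c, rfl⟩ := blos_surj n l hlpos s hs hm
    congr 1
    apply coeff_ext
    intro t
    rw [← hev, ← hd t, hdiag, blos_diag n l hlpos]
end

section
/- The (p,q)-Bernstein functions form a basis: let n ≥ 1 and let p, q be reals with 0 < q < p. Then the polynomials B_0^n(·;p,q), B_1^n(·;p,q), …, B_n^n(·;p,q) form a basis of the real vector space of polynomials of degree at most n; in particular, they are linearly independent and every real polynomial of degree at most n is a unique real linear combination of them. -/
/-- The (p,q)-Bernstein basis function `B_k^n(·;p,q)` as a polynomial in `ℝ[X]`. -/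
noncomputable def pqBernsteinPoly (p q : ℝ) (n k : ℕ) : Polynomial ℝ :=
  Polynomial.C (p ^ (k * (k - 1) / 2) / p ^ (n * (n - 1) / 2) * pqBinom p q n k) *
    Polynomial.X ^ k *
    ∏ s ∈ Finset.range (n - k), (Polynomial.C (p ^ s) - Polynomial.C (q ^ s) * Polynomial.X)

theorem pqInt_pos_aux (p q : ℝ) (hp : 0 < p) (hq : 0 < q) (n : ℕ) : 0 < pqInt p q (n + 1) := by
  unfold pqInt
  apply Finset.sum_pos
  · intro i _
    positivity
  · simp

theorem pqFact_pos_aux (p q : ℝ) (hp : 0 < p) (hq : 0 < q) (n : ℕ) : 0 < pqFact p q n := by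
  induction n with
  | zero => simp [pqFact]
  | succ n ih =>
    rw [pqFact]
    exact mul_pos ih (pqInt_pos_aux p q hp hq n)

theorem pqPoly_coeff_lt (p q : ℝ) (n k j : ℕ) (h : j < k) :
    (pqBernsteinPoly p q n k).coeff j = 0 := by
  unfold pqBernsteinPoly
  rw [mul_assoc, Polynomial.coeff_C_mul, Polynomial.coeff_X_pow_mul', if_neg (by omega), mul_zero]

theorem pqPoly_coeff_self (p q : ℝ) (hp : 0 < p) (hq : 0 < q) (n k : ℕ) :
    (pqBernsteinPoly p q n k).coeff k ≠ 0 := by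
  unfold pqBernsteinPoly
  rw [mul_assoc, Polynomial.coeff_C_mul, Polynomial.coeff_X_pow_mul', if_pos le_rfl, Nat.sub_self,
    Polynomial.coeff_zero_eq_eval_zero, Polynomial.eval_prod]
  have h1 := pqFact_pos_aux p q hp hq n
  have h2 := pqFact_pos_aux p q hp hq k
  have h3 := pqFact_pos_aux p q hp hq (n - k)
  have h4 : 0 < ∏ s ∈ Finset.range (n - k),
      Polynomial.eval 0 (Polynomial.C (p ^ s) - Polynomial.C (q ^ s) * Polynomial.X) := by
    apply Finset.prod_pos
    intro s _
    simp only [Polynomial.eval_sub, Polynomial.eval_C, Polynomial.eval_mul, Polynomial.eval_X,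
      mul_zero, sub_zero]
    positivity
  unfold pqBinom
  positivity

theorem pqPoly_natDegree_le (p q : ℝ) (n k : ℕ) (hk : k ≤ n) :
    (pqBernsteinPoly p q n k).natDegree ≤ n := by
  unfold pqBernsteinPoly
  have h1 : (∏ s ∈ Finset.range (n - k),
      (Polynomial.C (p ^ s) - Polynomial.C (q ^ s) * Polynomial.X)).natDegree ≤ n - k := by
    refine (Polynomial.natDegree_prod_le _ _).trans ?_
    refine (Finset.sum_le_card_nsmul _ _ 1 ?_).trans (by simp)
    intro s _
    compute_degree
  have h2 := Polynomial.natDegree_C_mul_X_pow_le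
    (p ^ (k * (k - 1) / 2) / p ^ (n * (n - 1) / 2) * pqBinom p q n k) k
  refine Polynomial.natDegree_mul_le.trans ?_
  omega

/-- the (p,q)-Bernstein functions `B_0^n, …, B_n^n` form a basis of the space
of real polynomials of degree at most `n`: they are linearly independent and span it. -/
theorem pqBernstein_basis (n : ℕ) (hn : 1 ≤ n) (p q : ℝ) (h0 : 0 < q) (hqp : q < p) :
    LinearIndependent ℝ (fun k : Fin (n + 1) => pqBernsteinPoly p q n (k : ℕ)) ∧
      Submodule.span ℝ (Set.range (fun k : Fin (n + 1) => pqBernsteinPoly p q n (k : ℕ))) =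
        Polynomial.degreeLE ℝ n := by
  have hp : 0 < p := h0.trans hqp
  have hli : LinearIndependent ℝ (fun k : Fin (n + 1) => pqBernsteinPoly p q n (k : ℕ)) := by
    rw [Fintype.linearIndependent_iff]
    intro g hg
    have key : ∀ m : ℕ, ∀ hm : m < n + 1, g ⟨m, hm⟩ = 0 := by
      intro m
      induction m using Nat.strong_induction_on with
      | _ m ih =>
        intro hm
        have hc := congrArg (fun P => Polynomial.coeff P m) hg
        simp only [Polynomial.finsetSum_coeff, Polynomial.coeff_smul, smul_eq_mul,
          Polynomial.coeff_zero] at hc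
        rw [Finset.sum_eq_single (⟨m, hm⟩ : Fin (n + 1))] at hc
        · exact (mul_eq_zero.mp hc).resolve_right (pqPoly_coeff_self p q hp h0 n m)
        · intro b _ hb
          have hne : (b : ℕ) ≠ m := fun h => hb (Fin.ext h)
          rcases lt_or_gt_of_ne hne with h | h
          · have := ih b h b.2
            rw [Fin.eta] at this
            rw [this, zero_mul]
          · rw [pqPoly_coeff_lt p q n b m h, mul_zero]
        · intro h
          exact absurd (Finset.mem_univ _) h
    intro i
    exact key i i.2
  refine ⟨hli, ?_⟩
  have hEq : Polynomial.degreeLE ℝ n = Polynomial.degreeLT ℝ (n + 1) :=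
    (Polynomial.degreeLT_succ_eq_degreeLE).symm
  rw [hEq]
  have : FiniteDimensional ℝ (Polynomial.degreeLT ℝ (n + 1)) :=
    Module.Finite.equiv (Polynomial.degreeLTEquiv ℝ (n + 1)).symm
  apply Submodule.eq_of_le_of_finrank_eq
  · rw [← hEq, Submodule.span_le]
    rintro _ ⟨k, rfl⟩
    exact Polynomial.mem_degreeLE.mpr (Polynomial.natDegree_le_iff_degree_le.mp
      (pqPoly_natDegree_le p q n k (Nat.lt_succ_iff.mp k.2)))
  · rw [finrank_span_eq_card hli, (Polynomial.degreeLTEquiv ℝ (n + 1)).finrank_eq]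
    simp
end

section
/- Uniqueness of (p,q)-Bézier control points: let n ≥ 1, let p, q be reals with 0 < q < p, let d ≥ 1, and let P_0, …, P_n and Q_0, …, Q_n be points of ℝ^d. If Σ_{k=0}^{n} P_k B_k^n(t;p,q) = Σ_{k=0}^{n} Q_k B_k^n(t;p,q) for all real t, then P_k = Q_k for k = 0, …, n. -/
theorem pqNode_eq_zero_iff_aux (p q : ℝ) (h0 : 0 < q) (hqp : q < p) (s m : ℕ) :
    p ^ s - q ^ s * (p / q) ^ m = 0 ↔ s = m := by
  have hq : q ^ s ≠ 0 := by positivity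
  have h1 : 1 < p / q := (one_lt_div h0).2 hqp
  have e : p ^ s = q ^ s * (p / q) ^ s := by rw [div_pow]; field_simp
  rw [e, sub_eq_zero, mul_right_inj' hq]
  exact pow_right_inj₀ (by linarith) h1.ne'

theorem pqBernstein_node_aux (p q : ℝ) (h0 : 0 < q) (hqp : q < p) (n k m : ℕ) :
    pqBernstein p q n k ((p / q) ^ m) = 0 ↔ m < n - k := by
  have hp : 0 < p := h0.trans hqp
  have h1 := pqFact_pos_aux p q hp h0 n
  have h2 := pqFact_pos_aux p q hp h0 k
  have h3 := pqFact_pos_aux p q hp h0 (n - k)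
  have hc : p ^ (k * (k - 1) / 2) / p ^ (n * (n - 1) / 2) * pqBinom p q n k
      * ((p / q) ^ m) ^ k ≠ 0 := by
    unfold pqBinom
    positivity
  unfold pqBernstein
  rw [mul_eq_zero, or_iff_right hc, Finset.prod_eq_zero_iff]
  simp [pqNode_eq_zero_iff_aux p q h0 hqp]

/-- uniqueness of (p,q)-Bézier control points: two (p,q)-Bézier curves of
degree `n` that agree for all `t` have the same control points. -/
theorem pqBezier_control_points_unique (n d : ℕ) (hn : 1 ≤ n) (hd : 1 ≤ d)
    (p q : ℝ) (h0 : 0 < q) (hqp : q < p)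
    (P Q : ℕ → Fin d → ℝ)
    (h : ∀ t : ℝ, ∑ k ∈ Finset.range (n + 1), pqBernstein p q n k t • P k =
      ∑ k ∈ Finset.range (n + 1), pqBernstein p q n k t • Q k) :
    ∀ k ≤ n, P k = Q k := by
  have key : ∀ m ≤ n, P (n - m) = Q (n - m) := by
    intro m
    induction m using Nat.strong_induction_on with
    | _ m ih =>
      intro hm
      have ht := h ((p / q) ^ m)
      rw [← sub_eq_zero, ← Finset.sum_sub_distrib, Finset.sum_eq_single (n - m)] at ht
      · rw [← smul_sub, smul_eq_zero] at ht
        rcases ht with ht | ht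
        · rw [pqBernstein_node_aux p q h0 hqp] at ht
          omega
        · exact sub_eq_zero.1 ht
      · intro b hb hbm
        have hb' : b < n + 1 := Finset.mem_range.1 hb
        by_cases hlt : m < n - b
        · rw [(pqBernstein_node_aux p q h0 hqp n b m).2 hlt]
          simp
        · have := ih (n - b) (by omega) (by omega)
          rw [show n - (n - b) = b by omega] at this
          rw [this, sub_self]
      · intro hx
        exact absurd (Finset.mem_range.2 (by omega)) hx
  intro k hk
  have := key (n - k) (by omega)
  rwa [show n - (n - k) = k by omega] at this
end

section
/- Dual functional property of the (p,q)-blossom: let n ≥ 1, let p, q be reals with 0 < q < p, let P_0, …, P_n be reals, let S(t) = Σ_{k=0}^{n} P_k B_k^n(t;p,q), and let s : ℝ^n → ℝ be the (p,q)-blossom of S. Then for each k = 0, …, n, P_k = s(0, …, 0, p^{n−1}, p^{n−2}q, …, p^{n−k}q^{k−1}), where the first n−k arguments are 0 and the remaining k arguments are p^{n−1}, p^{n−2}q, …, p^{n−k}q^{k−1}. -/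
/-- Gaussian binomial by Pascal recursion. -/
noncomputable def gBin (x : ℝ) : ℕ → ℕ → ℝ
  | 0, 0 => 1
  | 0, _ + 1 => 0
  | _ + 1, 0 => 1
  | r + 1, k + 1 => gBin x r (k + 1) + x ^ (r - k) * gBin x r k

lemma gBin_zero_right (x : ℝ) (r : ℕ) : gBin x r 0 = 1 := by
  cases r <;> simp [gBin]

lemma gBin_gt (x : ℝ) (r : ℕ) : ∀ k, r < k → gBin x r k = 0 := by
  induction r with
  | zero => intro k hk; cases k with
    | zero => omega
    | succ k => simp [gBin]
  | succ r ih => intro k hk; cases k with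
    | zero => omega
    | succ k => simp [gBin, ih (k + 1) (by omega), ih k (by omega)]

lemma pqInt_one_add (x : ℝ) (a b : ℕ) :
    pqInt 1 x (a + b) = pqInt 1 x a + x ^ a * pqInt 1 x b := by
  simp [pqInt, Finset.sum_range_add, Finset.mul_sum, pow_add]

lemma gBin_self (x : ℝ) (r : ℕ) : gBin x r r = 1 := by
  induction r with
  | zero => simp [gBin]
  | succ r ih => simp [gBin, ih, gBin_gt x r (r + 1) (by omega)]

lemma gBin_fact (x : ℝ) (m : ℕ) : ∀ k j, k + j = m →
    gBin x m k * (pqFact 1 x k * pqFact 1 x j) = pqFact 1 x m := by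
  induction m with
  | zero =>
    intro k j h
    obtain ⟨rfl, rfl⟩ : k = 0 ∧ j = 0 := by omega
    simp [gBin, pqFact]
  | succ m ih =>
    intro k j h
    rcases k with _ | k
    · obtain rfl : j = m + 1 := by omega
      simp [gBin, pqFact]
    rcases j with _ | j
    · obtain rfl : k = m := by omega
      rw [gBin_self]; simp [pqFact]
    have h1 := ih (k + 1) j (by omega)
    have h2 := ih k (j + 1) (by omega)
    have e : m - k = j + 1 := by omega
    have e2 : m + 1 = (j + 1) + (k + 1) := by omega
    have h3 := pqInt_one_add x (j + 1) (k + 1)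
    rw [← e2] at h3
    simp only [gBin, e, pqFact] at *
    rw [h3]
    linear_combination pqInt 1 x (j + 1) * h1 + x ^ (j + 1) * pqInt 1 x (k + 1) * h2

lemma pqInt_scale (p q : ℝ) (hp : 0 < p) (m : ℕ) :
    pqInt p q (m + 1) = p ^ m * pqInt 1 (q / p) (m + 1) := by
  unfold pqInt
  rw [Finset.mul_sum]
  refine Finset.sum_congr rfl fun j hj => ?_
  have hj' : j ≤ m := by have := Finset.mem_range.mp hj; omega
  obtain ⟨d, rfl⟩ := Nat.exists_eq_add_of_le hj'
  have : j + d + 1 - 1 - j = d := by omega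
  rw [this, div_pow, pow_add, one_pow]
  field_simp

lemma tri (m : ℕ) : (m + 1) * (m + 1 - 1) / 2 = m * (m - 1) / 2 + m := by
  have := Finset.sum_range_id_mul_two (m + 1)
  have h2 := Finset.sum_range_id_mul_two m
  rw [Finset.sum_range_succ] at this
  omega

lemma pqFact_scale (p q : ℝ) (hp : 0 < p) (m : ℕ) :
    pqFact p q m = p ^ (m * (m - 1) / 2) * pqFact 1 (q / p) m := by
  induction m with
  | zero => simp [pqFact]
  | succ m ih =>
    rw [pqFact, pqFact, ih, pqInt_scale p q hp, tri, pow_add]; ring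

lemma pqFact_pos_s12 (x : ℝ) (hx : 0 < x) (m : ℕ) : 0 < pqFact 1 x m := by
  induction m with
  | zero => simp [pqFact]
  | succ m ih =>
    rw [pqFact]
    refine mul_pos ih ?_
    unfold pqInt
    exact Finset.sum_pos (fun i _ => by positivity) (by simp)

/-- The Bernstein functions in the ratio form. -/
noncomputable def cB (x t : ℝ) (r k : ℕ) : ℝ :=
  gBin x r k * t ^ k * ∏ s ∈ Finset.range (r - k), (1 - x ^ s * t)

lemma prod_scale (p q t : ℝ) (hp : 0 < p) (m : ℕ) :
    ∏ s ∈ Finset.range m, (p ^ s - q ^ s * t)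
      = p ^ (m * (m - 1) / 2) * ∏ s ∈ Finset.range m, (1 - (q / p) ^ s * t) := by
  induction m with
  | zero => simp
  | succ m ih =>
    rw [Finset.prod_range_succ, Finset.prod_range_succ, ih, tri, pow_add, div_pow]
    generalize ∏ s ∈ Finset.range m, (1 - (q / p) ^ s * t) = D
    field_simp

lemma bern_eq (p q t : ℝ) (hp : 0 < p) (hq : 0 < q) (n k : ℕ) (hk : k ≤ n) :
    pqBernstein p q n k t = cB (q / p) t n k := by
  have hx : 0 < q / p := by positivity
  unfold pqBernstein cB pqBinom
  rw [prod_scale p q t hp, pqFact_scale p q hp n, pqFact_scale p q hp k,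
    pqFact_scale p q hp (n - k), ← gBin_fact (q / p) n k (n - k) (by omega)]
  have a := (pqFact_pos_s12 _ hx k).ne'
  have b := (pqFact_pos_s12 _ hx (n - k)).ne'
  generalize pqFact 1 (q / p) k = A at *
  generalize pqFact 1 (q / p) (n - k) = B at *
  generalize gBin (q / p) n k = C at *
  generalize ∏ s ∈ Finset.range (n - k), (1 - (q / p) ^ s * t) = D at *
  field_simp

lemma cB_succ (x t : ℝ) (r k : ℕ) (hk : k ≤ r) :
    cB x t (r + 1) (k + 1)
      = (1 - x ^ (r - (k + 1)) * t) * cB x t r (k + 1) + x ^ (r - k) * t * cB x t r k := by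
  rcases Nat.lt_or_ge k r with h | h
  · obtain ⟨d, rfl⟩ := Nat.exists_eq_add_of_lt h
    have e1 : k + d + 1 + 1 - (k + 1) = d + 1 := by omega
    have e2 : k + d + 1 - (k + 1) = d := by omega
    have e3 : k + d + 1 - k = d + 1 := by omega
    simp only [cB, gBin, e1, e2, e3, Finset.prod_range_succ]
    ring
  · obtain rfl : k = r := by omega
    simp [cB, gBin_self, gBin_gt x k (k + 1) (by omega)]
    ring

lemma cB_succ_zero (x t : ℝ) (r : ℕ) :
    cB x t (r + 1) 0 = (1 - x ^ r * t) * cB x t r 0 := by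
  simp [cB, gBin_zero_right, Finset.prod_range_succ]; ring

lemma sum_step (x t : ℝ) (r : ℕ) (X Y : ℕ → ℝ)
    (h : ∀ k ≤ r, X k = (1 - x ^ (r - k) * t) * Y k + x ^ (r - k) * t * Y (k + 1)) :
    ∑ k ∈ Finset.range (r + 1), cB x t r k * X k
      = ∑ k ∈ Finset.range (r + 2), cB x t (r + 1) k * Y k := by
  rw [Finset.sum_range_succ' _ (r + 1)]
  have e1 : ∑ k ∈ Finset.range (r + 1), cB x t (r + 1) (k + 1) * Y (k + 1)
      = ∑ k ∈ Finset.range (r + 1), (1 - x ^ (r - (k + 1)) * t) * cB x t r (k + 1) * Y (k + 1)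
        + ∑ k ∈ Finset.range (r + 1), x ^ (r - k) * t * cB x t r k * Y (k + 1) := by
    rw [← Finset.sum_add_distrib]
    refine Finset.sum_congr rfl fun k hk => ?_
    rw [cB_succ x t r k (by have := Finset.mem_range.mp hk; omega)]; ring
  have e2 := Finset.sum_range_succ'
    (fun k => (1 - x ^ (r - k) * t) * cB x t r k * Y k) (r + 1)
  have e3 : cB x t r (r + 1) = 0 := by simp [cB, gBin_gt x r (r + 1) (by omega)]
  rw [Finset.sum_range_succ, e3] at e2
  have e4 : ∑ k ∈ Finset.range (r + 1), cB x t r k * X k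
      = ∑ k ∈ Finset.range (r + 1), (1 - x ^ (r - k) * t) * cB x t r k * Y k
        + ∑ k ∈ Finset.range (r + 1), x ^ (r - k) * t * cB x t r k * Y (k + 1) := by
    rw [← Finset.sum_add_distrib]
    refine Finset.sum_congr rfl fun k hk => ?_
    rw [h k (by have := Finset.mem_range.mp hk; omega)]; ring
  rw [e1, e4, cB_succ_zero]
  simp only [Nat.sub_zero] at e2
  linear_combination e2

/-- Intermediate blossom arguments. -/
noncomputable def argA (n : ℕ) (w : ℕ → ℝ) (t : ℝ) (r k : ℕ) : Fin n → ℝ :=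
  fun i => if (i : ℕ) < k then w i else if (i : ℕ) < r then 0 else w i * t

lemma blossom_step (n : ℕ) (w : ℕ → ℝ) (x t : ℝ) (s : (Fin n → ℝ) → ℝ)
    (hsym : IsSymmetricFn n s) (haff : IsMultiaffine n s) (r k : ℕ) (hr : r < n) (hk : k ≤ r)
    (hw : w k ≠ 0) (hwr : w r = x ^ (r - k) * w k) :
    s (argA n w t r k) = (1 - x ^ (r - k) * t) * s (argA n w t (r + 1) k)
      + x ^ (r - k) * t * s (argA n w t (r + 1) (k + 1)) := by
  obtain ⟨a, b, hab⟩ := haff ⟨r, hr⟩ (argA n w t r k)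
  have u0 : Function.update (argA n w t r k) ⟨r, hr⟩ (w r * t) = argA n w t r k := by
    rw [Function.update_eq_self_iff]
    simp [argA, Nat.not_lt.mpr hk]
  have u1 : Function.update (argA n w t r k) ⟨r, hr⟩ 0 = argA n w t (r + 1) k := by
    funext i
    by_cases h : i = ⟨r, hr⟩
    · subst h; simp [argA]; intro h; omega
    · have h' : (i : ℕ) ≠ r := fun e => h (Fin.ext e)
      rw [Function.update_of_ne h]
      have : (i : ℕ) < r + 1 ↔ (i : ℕ) < r := by omega
      simp [argA, this]
  have u2 : s (Function.update (argA n w t r k) ⟨r, hr⟩ (w k)) = s (argA n w t (r + 1) (k + 1)) := by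
    have hkn : k < n := by omega
    rw [← hsym (Equiv.swap ⟨k, hkn⟩ ⟨r, hr⟩) (argA n w t (r + 1) (k + 1))]
    congr 1
    funext i
    by_cases h : i = ⟨r, hr⟩
    · subst h; simp [argA]
    rw [Function.update_of_ne h]
    by_cases h2 : i = ⟨k, hkn⟩
    · subst h2
      have h' : k ≠ r := fun e => h (Fin.ext e)
      have h3 : k < r := by omega
      have h4 : ¬ r < k + 1 := by omega
      simp [argA, h3, h4]
    · rw [Equiv.swap_apply_of_ne_of_ne h2 h]
      have h' : (i : ℕ) ≠ r := fun e => h (Fin.ext e)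
      have h2' : (i : ℕ) ≠ k := fun e => h2 (Fin.ext e)
      have e1 : (i : ℕ) < r + 1 ↔ (i : ℕ) < r := by omega
      have e2 : (i : ℕ) < k + 1 ↔ (i : ℕ) < k := by omega
      simp only [argA, e1, e2]
  rw [← u2, ← u1]
  conv_lhs => rw [← u0]
  rw [hab, hab, hab, hwr]
  ring

lemma cB_indep (n : ℕ) (x : ℝ) (hx : 0 < x) (hx1 : x < 1) (d : ℕ → ℝ)
    (h : ∀ t, ∑ k ∈ Finset.range (n + 1), d k * cB x t n k = 0) :
    ∀ m ≤ n, d (n - m) = 0 := by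
  intro m
  induction m using Nat.strong_induction_on with
  | _ m ih =>
    intro hm
    have H := h ((x ^ m)⁻¹)
    have hxm : x ^ m ≠ 0 := (pow_pos hx m).ne'
    rw [Finset.sum_eq_single (n - m)] at H
    · rcases mul_eq_zero.mp H with H | H
      · exact H
      exfalso
      revert H
      unfold cB
      refine mul_ne_zero (mul_ne_zero ?_ (by positivity)) ?_
      · intro h0
        have := gBin_fact x n (n - m) m (by omega)
        rw [h0, zero_mul] at this
        exact (pqFact_pos_s12 x hx n).ne this
      · rw [Finset.prod_ne_zero_iff]
        intro s hs h0
        have hs' : s < m := by have := Finset.mem_range.mp hs; omega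
        have : x ^ s = x ^ m := by
          field_simp at h0
          linarith
        have h2 := pow_lt_pow_right_of_lt_one₀ hx hx1 hs'
        linarith
    · intro k hk hkm
      have hk' : k ≤ n := by have := Finset.mem_range.mp hk; omega
      rcases Nat.lt_or_ge k (n - m) with h1 | h1
      · have : cB x (x ^ m)⁻¹ n k = 0 := by
          unfold cB
          rw [Finset.prod_eq_zero (i := m) (by simp; omega) (by simp [hxm]), mul_zero]
        rw [this, mul_zero]
      · have := ih (n - k) (by omega) (by omega)
        rw [show n - (n - k) = k by omega] at this
        rw [this, zero_mul]
    · intro hn; simp at hn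

/-- dual functional property of the (p,q)-blossom.  If `s` is the
(p,q)-blossom of the (p,q)-Bézier curve `S(t) = Σ_{k=0}^{n} P_k B_k^n(t;p,q)`, then
`P_k = s(0, …, 0, p^{n-1}, p^{n-2}q, …, p^{n-k}q^{k-1})` (first `n-k` arguments zero). -/
theorem pq_blossom_dual_functional (n : ℕ) (hn : 1 ≤ n)
    (p q : ℝ) (h0 : 0 < q) (hqp : q < p)
    (P : ℕ → ℝ) (S : ℝ → ℝ)
    (hS : ∀ t : ℝ, S t = ∑ k ∈ Finset.range (n + 1), P k * pqBernstein p q n k t)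
    (s : (Fin n → ℝ) → ℝ)
    (hsym : IsSymmetricFn n s) (haff : IsMultiaffine n s)
    (hdiag : ∀ t : ℝ, s (fun i => p ^ (n - 1 - (i : ℕ)) * q ^ (i : ℕ) * t) = S t) :
    ∀ k ≤ n, P k =
      s (fun i : Fin n => if (i : ℕ) < n - k then 0
          else p ^ (n - 1 - ((i : ℕ) - (n - k))) * q ^ ((i : ℕ) - (n - k))) := by
  have hp : 0 < p := h0.trans hqp
  set x := q / p with hxdef
  have hx : 0 < x := by positivity
  have hx1 : x < 1 := by rw [hxdef, div_lt_one hp]; exact hqp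
  let w : ℕ → ℝ := fun i => p ^ (n - 1 - i) * q ^ i
  have hw : ∀ i, w i ≠ 0 := fun i => by
    have : 0 < w i := by positivity
    exact this.ne'
  have hwr : ∀ r k, k ≤ r → r < n → w r = x ^ (r - k) * w k := by
    intro r k hk hr
    obtain ⟨d, rfl⟩ := Nat.exists_eq_add_of_le hk
    have e1 : n - 1 - k = (n - 1 - (k + d)) + d := by omega
    have e2 : k + d - k = d := by omega
    simp only [w, hxdef, e1, e2, div_pow, pow_add]
    field_simp
  have main : ∀ t, ∀ r ≤ n, S t = ∑ k ∈ Finset.range (r + 1), cB x t r k * s (argA n w t r k) := by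
    intro t r
    induction r with
    | zero =>
      intro _
      rw [← hdiag t]
      have e : argA n w t 0 0 = fun i : Fin n => p ^ (n - 1 - (i : ℕ)) * q ^ (i : ℕ) * t := by
        funext i; simp [argA, w]
      simp [cB, gBin, e]
    | succ r ih =>
      intro hr
      rw [ih (by omega)]
      exact sum_step x t r _ _ fun k hk =>
        blossom_step n w x t s hsym haff r k (by omega) hk (hw k) (hwr r k hk (by omega))
  have indT : ∀ t k, argA n w t n k = argA n w 0 n k := by
    intro t k
    funext i
    simp [argA, i.isLt]
  have key := cB_indep n x hx hx1 (fun k => P k - s (argA n w 0 n k)) (by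
    intro t
    have h1 := main t n le_rfl
    rw [hS t] at h1
    simp only [sub_mul, Finset.sum_sub_distrib]
    rw [sub_eq_zero]
    convert h1 using 1
    · refine Finset.sum_congr rfl fun k hk => ?_
      rw [bern_eq p q t hp h0 n k (by have := Finset.mem_range.mp hk; omega)]
    · refine Finset.sum_congr rfl fun k hk => ?_
      rw [indT t k, mul_comm])
  intro k hk
  have hk2 := key (n - k) (by omega)
  rw [show n - (n - k) = k by omega] at hk2
  rw [sub_eq_zero.mp hk2]
  let f : Fin n → Fin n := fun i =>
    if h : (i : ℕ) < n - k then ⟨i + k, by omega⟩ else ⟨i - (n - k), by omega⟩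
  have hf : Function.Injective f := by
    intro i j hij
    apply Fin.ext
    simp only [f] at hij
    split_ifs at hij <;> simp only [Fin.mk.injEq] at hij <;> omega
  have hb := Finite.injective_iff_bijective.mp hf
  rw [← hsym (Equiv.ofBijective f hb) (argA n w 0 n k)]
  congr 1
  funext i
  simp only [Equiv.ofBijective_apply, argA, f]
  by_cases h : (i : ℕ) < n - k
  · simp [h]
  · have : (i : ℕ) - (n - k) < k := by omega
    simp [h, this, w]
end
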